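/- For every bimodal formula A: A ∈ S4D if and only if A is valid in every S4D-frame of the form (W, R, ≠), i.e., for every set W and every reflexive transitive relation R on W, the Kripke frame (W, R, ≠) (where the second relation is inequality) validates A. -/

import Mathlib

/-!
Soundness is an induction on derivations: with `R` a preorder and inequality as second relation,
every axiom is valid, and the rules preserve validity.

Completeness goes through the canonical model, whose points are the maximal consistent theories
(`IsMaxThy`). All the S4D axioms are canonical: `canR` is a preorder, `canD` is symmetric and
pseudo-transitive, and `canR ⊆ canD ∪ Id`. Hence in the part generated by a theory `x₀` omitting
`A`, any two *distinct* points are `canD`-related, so `canD` differs from inequality only by having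
some reflexive points. Replacing each `canD`-reflexive point by two copies, and each irreflexive
one by a single copy, gives a frame `(W, R, ≠)` projecting p-morphically onto the generated part
(`Unravel`); the truth lemma is proved directly on this frame (`truth_unravel`).

The existence of maximal theories is handled without finite derivations: `IsThy` isolates sets
that contain the logic and are closed under modus ponens. The sets `{B | A → B ∈ T}`,
`{B | □B ∈ T}` and `{B | [≠]B ∈ T}` are of this kind when `T` is, which is all that the Lindenbaum
and existence lemmas need.
-/

/-- Bimodal formulas: propositional letters, falsum, implication, box, and
the difference modality `[≠]` (called `dbox` here). -/
inductive BForm : Type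
  | var : ℕ → BForm
  | bot : BForm
  | imp : BForm → BForm → BForm
  | box : BForm → BForm
  | dbox : BForm → BForm
  deriving DecidableEq

namespace BForm

/-- Classical negation. -/
def neg (A : BForm) : BForm := imp A bot

/-- Classical conjunction. -/
def conj (A B : BForm) : BForm := neg (imp A (neg B))

/-- `◇A = ¬□¬A`. -/
def dia (A : BForm) : BForm := neg (box (neg A))

/-- `⟨≠⟩A = ¬[≠]¬A`. -/
def ddia (A : BForm) : BForm := neg (dbox (neg A))

end BForm

/-- Truth at a point of a Kripke model over a frame `(W, R, R_D)`. -/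
def ksat {W : Type} (R RD : W → W → Prop) (θ : ℕ → Set W) : W → BForm → Prop
  | x, .var n => x ∈ θ n
  | _, .bot => False
  | x, .imp A B => ksat R RD θ x A → ksat R RD θ x B
  | x, .box A => ∀ y, R x y → ksat R RD θ y A
  | x, .dbox A => ∀ y, RD x y → ksat R RD θ y A

/-- Validity in a Kripke frame: truth at every point under every valuation. -/
def kvalid {W : Type} (R RD : W → W → Prop) (A : BForm) : Prop :=
  ∀ (θ : ℕ → Set W) (x : W), ksat R RD θ x A

/-- Truth at a point of a topological model. -/
def tsat {X : Type} [TopologicalSpace X] (θ : ℕ → Set X) : X → BForm → Prop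
  | x, .var n => x ∈ θ n
  | _, .bot => False
  | x, .imp A B => tsat θ x A → tsat θ x B
  | x, .box A => ∃ U : Set X, IsOpen U ∧ x ∈ U ∧ ∀ y ∈ U, tsat θ y A
  | x, .dbox A => ∀ y, y ≠ x → tsat θ y A

/-- Validity in a topological space. -/
def tvalid (X : Type) [TopologicalSpace X] (A : BForm) : Prop :=
  ∀ (θ : ℕ → Set X) (x : X), tsat θ x A

/-- Uniform substitution of formulas for propositional letters. -/
def substF (σ : ℕ → BForm) : BForm → BForm
  | .var n => σ n
  | .bot => .bot
  | .imp A B => .imp (substF σ A) (substF σ B)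
  | .box A => .box (substF σ A)
  | .dbox A => .dbox (substF σ A)

/-- Boolean evaluation of a formula, treating letters and modal formulas as atoms. -/
def beval (v : BForm → Bool) : BForm → Bool
  | .var n => v (.var n)
  | .bot => false
  | .imp A B => !(beval v A) || beval v B
  | .box A => v (.box A)
  | .dbox A => v (.dbox A)

/-- A classical tautology of the bimodal language. -/
def Tautology (A : BForm) : Prop := ∀ v : BForm → Bool, beval v A = true

/-- The letter `p`. -/
def pLet : BForm := .var 0
/-- The letter `q`. -/
def qLet : BForm := .var 1

/-- The least bimodal logic containing `K₂`, the S4D axioms and the extra axioms `Ax`,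
closed under modus ponens, uniform substitution, and both necessitation rules. -/
inductive Logic (Ax : Set BForm) : BForm → Prop
  | taut {A : BForm} : Tautology A → Logic Ax A
  | axKBox : Logic Ax (.imp (.box (.imp pLet qLet)) (.imp (.box pLet) (.box qLet)))
  | axKD : Logic Ax (.imp (.dbox (.imp pLet qLet)) (.imp (.dbox pLet) (.dbox qLet)))
  | axBD : Logic Ax (.imp pLet (.dbox (BForm.ddia pLet)))
  | ax4mD : Logic Ax (.imp (BForm.conj pLet (.dbox pLet)) (.dbox (.dbox pLet)))
  | axTBox : Logic Ax (.imp (.box pLet) pLet)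
  | ax4Box : Logic Ax (.imp (.box pLet) (.box (.box pLet)))
  | axDBox : Logic Ax (.imp (BForm.conj (.dbox pLet) pLet) (.box pLet))
  | extra {A : BForm} : A ∈ Ax → Logic Ax A
  | mp {A B : BForm} : Logic Ax (.imp A B) → Logic Ax A → Logic Ax B
  | subst {A : BForm} (σ : ℕ → BForm) : Logic Ax A → Logic Ax (substF σ A)
  | necBox {A : BForm} : Logic Ax A → Logic Ax (.box A)
  | necD {A : BForm} : Logic Ax A → Logic Ax (.dbox A)

/-- The axiom (DS): `[≠]p → ◇p`. -/
def dsAx : BForm := .imp (.dbox pLet) (BForm.dia pLet)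

/-- The axiom (AT₁): `[≠]p → [≠]□p`. -/
def at1Ax : BForm := .imp (.dbox pLet) (.dbox (.box pLet))

/-- The logic S4D. -/
def S4D : BForm → Prop := Logic ∅

/-- The logic S4DS = S4D + (DS). -/
def S4DS : BForm → Prop := Logic {dsAx}

/-- The logic S4DT1S = S4DS + (AT₁). -/
def S4DT1S : BForm → Prop := Logic {dsAx, at1Ax}

/-- `(W, R, R_D)` is an S4D-frame: `R` is reflexive and transitive, `R_D` is
symmetric and pseudo-transitive, and `R ⊆ R_D ∪ Id`. -/
structure IsS4DFrame {W : Type} (R RD : W → W → Prop) : Prop where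
  refl : ∀ x, R x x
  trans : ∀ ⦃x y z⦄, R x y → R y z → R x z
  symm : ∀ ⦃x y⦄, RD x y → RD y x
  ptrans : ∀ ⦃x y z⦄, RD x y → RD y z → x ≠ z → RD x z
  inc : ∀ ⦃x y⦄, R x y → RD x y ∨ x = y

/-- A T₁-frame: every `R_D`-irreflexive point is `R`-minimal. -/
def IsT1Frame {W : Type} (R RD : W → W → Prop) : Prop :=
  ∀ x, ¬ RD x x → ∀ y, R y x → y = x

/-- A DS-frame: every `R_D`-irreflexive point has an `R`-successor distinct from itself. -/
def IsDSFrame {W : Type} (R RD : W → W → Prop) : Prop :=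
  ∀ x, ¬ RD x x → ∃ y, y ≠ x ∧ R x y

/-- A cd-p-morphism from a topological space `X` onto a Kripke frame `(W, R, R_D)`. -/
structure IsCdPMorphism {X : Type} [TopologicalSpace X] {W : Type}
    (R RD : W → W → Prop) (f : X → W) : Prop where
  surj : Function.Surjective f
  cl : ∀ w : W, closure (f ⁻¹' {w}) = f ⁻¹' {v | R v w}
  diff : ∀ w : W, {x : X | ∃ y, y ≠ x ∧ f y = w} = f ⁻¹' {v | RD v w}

/-- A p-morphism between Kripke frames. -/
structure IsPMorphism {W W' : Type} (R RD : W → W → Prop) (R' RD' : W' → W' → Prop)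
    (f : W → W') : Prop where
  surj : Function.Surjective f
  forth : ∀ ⦃x y⦄, R x y → R' (f x) (f y)
  forthD : ∀ ⦃x y⦄, RD x y → RD' (f x) (f y)
  back : ∀ x z, R' (f x) z → ∃ y, R x y ∧ f y = z
  backD : ∀ x z, RD' (f x) z → ∃ y, RD x y ∧ f y = z

/-- The Alexandrov topology on `W` whose open sets are the `R`-upward-closed sets. -/
def alexandrov {W : Type} (R : W → W → Prop) : TopologicalSpace W where
  IsOpen U := ∀ ⦃x⦄, x ∈ U → ∀ ⦃y⦄, R x y → y ∈ U
  isOpen_univ := fun _ _ _ _ => trivial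
  isOpen_inter := fun _ _ hU hV x hx y hxy => ⟨hU hx.1 hxy, hV hx.2 hxy⟩
  isOpen_sUnion := fun _ hS x hx y hxy => by
    obtain ⟨U, hU, hxU⟩ := hx
    exact ⟨U, hU, hS U hU hxU hxy⟩

/-! ### Soundness -/

theorem ksat_substF {W : Type} (R RD : W → W → Prop) (σ : ℕ → BForm) (θ : ℕ → Set W)
    (A : BForm) (x : W) :
    ksat R RD θ x (substF σ A) ↔ ksat R RD (fun n => {y | ksat R RD θ y (σ n)}) x A := by
  induction A generalizing x with
  | var n => rfl
  | bot => rfl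
  | imp A B hA hB => simp only [substF, ksat, hA, hB]
  | box A hA => simp only [substF, ksat, hA]
  | dbox A hA => simp only [substF, ksat, hA]

open Classical in
/-- Truth at a point is a Boolean valuation of the modal atoms, so tautologies are true. -/
theorem beval_ksat {W : Type} (R RD : W → W → Prop) (θ : ℕ → Set W) (x : W) (A : BForm) :
    beval (fun B => decide (ksat R RD θ x B)) A = true ↔ ksat R RD θ x A := by
  induction A with
  | var n => simp [beval]
  | bot => simp [beval, ksat]
  | imp A B hA hB =>
    rw [ksat, ← hA, ← hB, beval]
    cases beval (fun B => decide (ksat R RD θ x B)) A <;> simp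
  | box A => simp [beval]
  | dbox A => simp [beval]

theorem s4d_sound {W : Type} {R : W → W → Prop} (hr : Reflexive R) (ht : Transitive R)
    {A : BForm} (h : S4D A) : kvalid R (fun x y => x ≠ y) A := by
  induction h with
  | taut h => exact fun θ x => (beval_ksat _ _ θ x _).1 (h _)
  | axKBox => exact fun θ x h1 h2 y hy => h1 y hy (h2 y hy)
  | axKD => exact fun θ x h1 h2 y hy => h1 y hy (h2 y hy)
  | axBD => exact fun θ x hx y hy hn => hn x (Ne.symm hy) hx
  | ax4mD =>
    intro θ x hx y hy z hz
    by_contra hc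
    refine hx fun h1 h2 => hc ?_
    by_cases e : x = z
    · exact e ▸ h1
    · exact h2 z e
  | axTBox => exact fun θ x h => h x (hr x)
  | ax4Box => exact fun θ x h y hy z hz => h z (ht hy hz)
  | axDBox =>
    intro θ x hx y hy
    by_contra hc
    refine hx fun h1 h2 => hc ?_
    by_cases e : x = y
    · exact e ▸ h2
    · exact h1 y e
  | extra h => exact h.elim
  | mp _ _ h1 h2 => exact fun θ x => h1 θ x (h2 θ x)
  | subst σ _ h => exact fun θ x => (ksat_substF _ _ σ θ _ x).2 (h _ x)
  | necBox _ h => exact fun θ x y _ => h θ y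
  | necD _ h => exact fun θ x y _ => h θ y

/-! ### Theories and Lindenbaum's lemma -/

open BForm

/-- A theory: a set of formulas containing S4D and closed under modus ponens. -/
structure IsThy (T : Set BForm) : Prop where
  thm : ∀ ⦃A⦄, S4D A → A ∈ T
  mp : ∀ ⦃A B⦄, imp A B ∈ T → A ∈ T → B ∈ T

/-- A maximal consistent theory, expressed by consistency and negation-completeness. -/
structure IsMaxThy (T : Set BForm) : Prop extends IsThy T where
  cons : bot ∉ T
  compl : ∀ A, A ∈ T ∨ neg A ∈ T

namespace IsThy

variable {T : Set BForm}

theorem taut (h : IsThy T) {A : BForm} (hA : Tautology A) : A ∈ T := h.thm (.taut hA)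

/-- The theory obtained by adding `A`; the deduction theorem is built into its description. -/
theorem adjoin (h : IsThy T) (A : BForm) : IsThy {B | imp A B ∈ T} where
  thm B hB := h.mp (h.taut (fun v => by simp only [beval]; cases beval v A <;> simp))
    (h.thm hB)
  mp B C hBC hB := by
    have : imp (imp A (imp B C)) (imp (imp A B) (imp A C)) ∈ T := h.taut (fun v => by
      simp only [beval]
      cases beval v A <;> cases beval v B <;> cases beval v C <;> rfl)
    exact h.mp (h.mp this hBC) hB

theorem box_preimage (h : IsThy T) : IsThy {B | box B ∈ T} where
  thm _ hB := h.thm (.necBox hB)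
  mp B C hBC hB := by
    have hK : S4D (imp (box (imp B C)) (imp (box B) (box C))) :=
      Logic.subst (fun n => if n = 0 then B else C) .axKBox
    exact h.mp (h.mp (h.thm hK) hBC) hB

theorem dbox_preimage (h : IsThy T) : IsThy {B | dbox B ∈ T} where
  thm _ hB := h.thm (.necD hB)
  mp B C hBC hB := by
    have hK : S4D (imp (dbox (imp B C)) (imp (dbox B) (dbox C))) :=
      Logic.subst (fun n => if n = 0 then B else C) .axKD
    exact h.mp (h.mp (h.thm hK) hBC) hB

/-- Lindenbaum's lemma, in the form: a formula outside a theory is omitted by a maximal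
consistent extension. -/
theorem exists_isMaxThy (h : IsThy T) {A : BForm} (hA : A ∉ T) :
    ∃ M, IsMaxThy M ∧ T ⊆ M ∧ A ∉ M := by
  obtain ⟨M, hTM, hM⟩ := zorn_subset_nonempty {S | IsThy S ∧ A ∉ S} (by
    intro c hc hchain ⟨S₀, hS₀⟩
    refine ⟨⋃₀ c, ⟨⟨fun B hB => ⟨S₀, hS₀, (hc hS₀).1.thm hB⟩, ?_⟩, ?_⟩,
      fun s hs => Set.subset_sUnion_of_mem hs⟩
    · rintro B C ⟨S, hS, hBC⟩ ⟨S', hS', hB⟩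
      rcases hchain.total hS hS' with hle | hle
      · exact ⟨S', hS', (hc hS').1.mp (hle hBC) hB⟩
      · exact ⟨S, hS, (hc hS).1.mp hBC (hle hB)⟩
    · rintro ⟨S, hS, hAS⟩
      exact (hc hS).2 hAS) T ⟨h, hA⟩
  obtain ⟨hM1, hM2⟩ := hM.prop
  have key : ∀ B, B ∉ M → imp B A ∈ M := by
    intro B hB
    by_contra hc
    have hsub : M ⊆ {C | imp B C ∈ M} := fun C hC =>
      hM1.mp (hM1.taut (fun v => by simp only [beval]; cases beval v C <;> simp)) hC
    refine hB (hM.le_of_ge (y := {C | imp B C ∈ M}) ⟨hM1.adjoin B, hc⟩ hsub ?_)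
    exact hM1.taut (fun v => by simp only [beval]; cases beval v B <;> rfl)
  refine ⟨M, ⟨hM1, fun hb => hM2 ?_, fun B => ?_⟩, hTM, hM2⟩
  · exact hM1.mp (hM1.taut (fun v => by simp [beval])) hb
  · by_contra! hc
    have : imp (imp B A) (imp (imp (neg B) A) A) ∈ M := hM1.taut (fun v => by
      simp only [beval, neg]
      cases beval v A <;> cases beval v B <;> rfl)
    exact hM2 (hM1.mp (hM1.mp this (key B hc.1)) (key _ hc.2))

end IsThy

namespace IsMaxThy

variable {T S : Set BForm}

theorem neg_mem (h : IsMaxThy T) {A : BForm} : neg A ∈ T ↔ A ∉ T :=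
  ⟨fun hn hA => h.cons (h.mp hn hA), (h.compl A).resolve_left⟩

theorem imp_mem (h : IsMaxThy T) {A B : BForm} : imp A B ∈ T ↔ (A ∈ T → B ∈ T) := by
  refine ⟨fun hi hA => h.mp hi hA, fun hi => ?_⟩
  by_cases hA : A ∈ T
  · exact h.mp (h.taut (fun v => by simp only [beval]; cases beval v B <;> simp)) (hi hA)
  · exact h.mp (h.taut (fun v => by simp only [beval, neg]; cases beval v A <;> simp))
      (h.neg_mem.2 hA)

theorem conj_mem (h : IsMaxThy T) {A B : BForm} : conj A B ∈ T ↔ A ∈ T ∧ B ∈ T := by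
  rw [conj, h.neg_mem, h.imp_mem, h.neg_mem]
  tauto

theorem exists_mem_notMem (h : IsMaxThy T) (h' : IsMaxThy S) (hne : T ≠ S) : ∃ C ∈ T, C ∉ S := by
  by_contra! hc
  refine hne (Set.Subset.antisymm hc fun B hB => ?_)
  by_contra hn
  exact h'.neg_mem.1 (hc _ (h.neg_mem.2 hn)) hB

end IsMaxThy

/-! ### The canonical frame -/

/-- The canonical accessibility relation for `□`. -/
def canR (T S : Set BForm) : Prop := ∀ ⦃A⦄, box A ∈ T → A ∈ S

/-- The canonical accessibility relation for `[≠]`. -/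
def canD (T S : Set BForm) : Prop := ∀ ⦃A⦄, dbox A ∈ T → A ∈ S

section Canonical

variable {T S U : Set BForm}

theorem canR_refl (h : IsMaxThy T) : canR T T := fun A hA =>
  h.mp (h.thm (Logic.subst (fun _ => A) .axTBox)) hA

theorem canR_trans (h : IsMaxThy T) (h1 : canR T S) (h2 : canR S U) : canR T U := fun A hA =>
  h2 (h1 (h.mp (h.thm (Logic.subst (fun _ => A) .ax4Box)) hA))

theorem canD_symm (h : IsMaxThy T) (h' : IsMaxThy S) (hd : canD T S) : canD S T := by
  intro A hA
  by_contra hn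
  have h1 : dbox (ddia (neg A)) ∈ T :=
    h.mp (h.thm (Logic.subst (fun _ => neg A) .axBD)) (h.neg_mem.2 hn)
  have h2 : dbox (neg (neg A)) ∈ S := h'.dbox_preimage.mp
    (h'.dbox_preimage.taut (fun v => by simp only [beval, neg]; cases beval v A <;> rfl)) hA
  exact h'.neg_mem.1 (hd h1) h2

/-- A formula `C` separating `T` from another theory turns `A` into a formula `¬A → C` that is
true at `T` but, at points omitting `C`, is equivalent to `A`. -/
theorem separator (h : IsMaxThy T) {A C : BForm} (hA : dbox A ∈ T) (hC : C ∈ T) :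
    imp (neg A) C ∈ T ∧ dbox (imp (neg A) C) ∈ T := by
  refine ⟨h.imp_mem.2 fun _ => hC, h.dbox_preimage.mp (h.dbox_preimage.taut fun v => ?_) hA⟩
  simp only [beval, neg]
  cases beval v A <;> cases beval v C <;> rfl

theorem mem_of_separator (h : IsMaxThy S) {A C : BForm} (hP : imp (neg A) C ∈ S) (hC : C ∉ S) :
    A ∈ S := by
  by_contra hn
  exact hC (h.mp hP (h.neg_mem.2 hn))

theorem canD_ptrans (h : IsMaxThy T) (h'' : IsMaxThy U) (h1 : canD T S) (h2 : canD S U)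
    (hne : T ≠ U) : canD T U := by
  intro A hA
  obtain ⟨C, hC, hCU⟩ := h.exists_mem_notMem h'' hne
  have h4 : dbox (dbox (imp (neg A) C)) ∈ T :=
    h.mp (h.thm (Logic.subst (fun _ => imp (neg A) C) .ax4mD)) (h.conj_mem.2 (separator h hA hC))
  exact mem_of_separator h'' (h2 (h1 h4)) hCU

theorem canR_inc (h : IsMaxThy T) (h' : IsMaxThy S) (hR : canR T S) (hne : T ≠ S) : canD T S := by
  intro A hA
  obtain ⟨C, hC, hCS⟩ := h.exists_mem_notMem h' hne
  have h4 : box (imp (neg A) C) ∈ T :=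
    h.mp (h.thm (Logic.subst (fun _ => imp (neg A) C) .axDBox))
      (h.conj_mem.2 (separator h hA hC).symm)
  exact mem_of_separator h' (hR h4) hCS

end Canonical

/-! ### The frame with inequality -/

/-- The points of the canonical frame `canD`-generated by `x₀`, the `canD`-reflexive ones taken
twice: the copy with flag `true` exists only for reflexive points. -/
abbrev Unravel (x₀ : Set BForm) : Type :=
  {p : Set BForm × Bool // IsMaxThy p.1 ∧ (canD x₀ p.1 ∨ x₀ = p.1) ∧ (p.2 = true → canD p.1 p.1)}

/-- The accessibility relation for `□` on `Unravel x₀`, which ignores the flags. -/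
def Unravel.rel {x₀ : Set BForm} (w v : Unravel x₀) : Prop := canR w.1.1 v.1.1

/-- Over a point `w` of the generated part, the `canD`-successors are exactly the theories of the
points different from `w`. -/
theorem canD_iff_exists_ne {x₀ : Set BForm} (h₀ : IsMaxThy x₀) (w : Unravel x₀) {S : Set BForm}
    (hS : IsMaxThy S) : canD w.1.1 S ↔ ∃ v : Unravel x₀, w ≠ v ∧ v.1.1 = S := by
  obtain ⟨⟨T, i⟩, hT, hg, hi⟩ := w
  constructor
  · intro hd
    by_cases e : T = S
    · subst e
      refine ⟨⟨(T, !i), hT, hg, fun _ => hd⟩, fun e => ?_, rfl⟩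
      have := congrArg (fun p : Unravel x₀ => p.1.2) e
      cases i <;> simp at this
    · refine ⟨⟨(S, false), hS, ?_, by simp⟩, fun e' => e ?_, rfl⟩
      · by_cases e0 : x₀ = S
        · exact Or.inr e0
        · refine Or.inl ?_
          rcases hg with hg | hg
          · exact canD_ptrans h₀ hS hg hd e0
          · have hg : x₀ = T := hg
            exact hg ▸ hd
      · exact congrArg (fun p : Unravel x₀ => p.1.1) e'
  · rintro ⟨⟨⟨S', j⟩, hS', hg', hj⟩, hne, rfl⟩
    simp only at hT hg hi hS' hg' hj ⊢
    by_cases e : T = S'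
    · -- Equal theories with different flags: one flag is `true`, so the theory is reflexive.
      subst e
      have hij : i ≠ j := fun e => hne (by subst e; rfl)
      cases i
      · exact hj (by simpa using hij.symm)
      · exact hi rfl
    · rcases hg with hg | rfl
      · rcases hg' with hg' | rfl
        · exact canD_ptrans hT hS' (canD_symm h₀ hT hg) hg' e
        · exact canD_symm h₀ hT hg
      · exact hg'.resolve_right e

theorem truth_unravel {x₀ : Set BForm} (h₀ : IsMaxThy x₀) (A : BForm) (w : Unravel x₀) :
    ksat Unravel.rel (fun x y => x ≠ y) (fun n => {v | var n ∈ v.1.1}) w A ↔ A ∈ w.1.1 := by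
  have hw := w.2.1
  induction A generalizing w with
  | var n => rfl
  | bot => exact ⟨False.elim, hw.cons⟩
  | imp A B hA hB => exact (imp_congr (hA w hw) (hB w hw)).trans hw.imp_mem.symm
  | box A hA =>
    refine ⟨fun h => ?_, fun h v hv => (hA v v.2.1).2 (hv h)⟩
    by_contra hn
    obtain ⟨S, hS, hwS, hAS⟩ := hw.box_preimage.exists_isMaxThy hn
    have hR : canR w.1.1 S := fun B hB => hwS hB
    -- By `canR ⊆ canD ∪ Id`, the theory `S` is carried by `w` itself or by another point.
    obtain ⟨v, rfl⟩ : ∃ v : Unravel x₀, v.1.1 = S := by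
      by_cases e : w.1.1 = S
      · exact ⟨w, e⟩
      · obtain ⟨v, -, hv⟩ := (canD_iff_exists_ne h₀ w hS).1 (canR_inc hw hS hR e)
        exact ⟨v, hv⟩
    exact hAS ((hA v hS).1 (h v hR))
  | dbox A hA =>
    refine ⟨fun h => ?_, fun h v hv =>
      (hA v v.2.1).2 ((canD_iff_exists_ne h₀ w v.2.1).2 ⟨v, hv, rfl⟩ h)⟩
    by_contra hn
    obtain ⟨S, hS, hwS, hAS⟩ := hw.dbox_preimage.exists_isMaxThy hn
    obtain ⟨v, hv, rfl⟩ := (canD_iff_exists_ne h₀ w hS).1 fun B hB => hwS hB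
    exact hAS ((hA v hS).1 (h v hv))

/-- `A ∈ S4D` iff `A` is valid in every frame `(W, R, ≠)` with `R`
reflexive and transitive. -/
theorem s4d_complete_wrt_inequality_frames (A : BForm) :
    S4D A ↔ ∀ (W : Type) (R : W → W → Prop), Reflexive R → Transitive R →
      kvalid R (fun x y => x ≠ y) A := by
  refine ⟨fun h W R hr ht => s4d_sound hr ht h, fun h => ?_⟩
  by_contra hA
  have hThy : IsThy {B | S4D B} := ⟨fun _ hB => hB, fun _ _ h1 h2 => Logic.mp h1 h2⟩
  obtain ⟨x₀, h₀, -, hx₀⟩ := hThy.exists_isMaxThy hA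
  refine hx₀ ((truth_unravel h₀ A ⟨(x₀, false), h₀, Or.inr rfl, by simp⟩).1 ?_)
  exact h _ Unravel.rel (fun w => canR_refl w.2.1) (fun w _ _ h1 h2 => canR_trans w.2.1 h1 h2) _ _
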